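/- Equivalence of sufficient conditions (Theorem 4.3). Let V = {Vⁿ} be a general source and W = {Wⁿ} a general channel. The following are equivalent. (1) There exist a channel input X = {Xⁿ} and a sequence {γₙ} with γₙ > 0, γₙ → 0, nγₙ → ∞, such that limₙ Pr{ (1/n) log( Wⁿ(Yⁿ|Xⁿ)/P_{Yⁿ}(Yⁿ) ) ≤ (1/n) log( 1/P_{Vⁿ}(Vⁿ) ) + γₙ } = 0. (2) (Strict domination) There exist a channel input X = {Xⁿ}, a real sequence {cₙ}, and a sequence {γₙ} with γₙ > 0, γₙ → 0, nγₙ → ∞, such that limₙ ( Pr{ (1/n) log( 1/P_{Vⁿ}(Vⁿ) ) ≥ cₙ } + Pr{ (1/n) log( Wⁿ(Yⁿ|Xⁿ)/P_{Yⁿ}(Yⁿ) ) ≤ cₙ + γₙ } ) = 0. In both conditions Yⁿ denotes the channel output due to the input Xⁿ. -/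

import Mathlib

open Filter Real Topology

namespace ISC

/-- Words of length `n` over alphabet `A`. -/
abbrev Word (A : Type*) (n : ℕ) : Type _ := Fin n → A

/-- `p` is a probability mass function. -/
def IsPMF {α : Type*} (p : α → ℝ) : Prop :=
  (∀ a, 0 ≤ p a) ∧ HasSum p 1

/-- Probability of the event `S` under the pmf `p`. -/
noncomputable def prob {α : Type*} (p : α → ℝ) (S : Set α) : ℝ :=
  ∑' a, S.indicator p a

/-- Output marginal `P_{Yⁿ}` of the channel `W` fed with the joint input law `P_{VⁿXⁿ}`. -/
noncomputable def outDist {𝒱 𝒳 𝒴 : Type*} {n : ℕ}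
    (PVX : Word 𝒱 n × Word 𝒳 n → ℝ) (W : Word 𝒳 n → Word 𝒴 n → ℝ)
    (y : Word 𝒴 n) : ℝ :=
  ∑' vx : Word 𝒱 n × Word 𝒳 n, PVX vx * W vx.2 y

/-- Joint law of `(Vⁿ, Xⁿ, Yⁿ)`: `P_{VⁿXⁿ}(v,x) · Wⁿ(y|x)`. -/
noncomputable def jointLaw {𝒱 𝒳 𝒴 : Type*} {n : ℕ}
    (PVX : Word 𝒱 n × Word 𝒳 n → ℝ) (W : Word 𝒳 n → Word 𝒴 n → ℝ) :
    Word 𝒱 n × Word 𝒳 n × Word 𝒴 n → ℝ :=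
  fun z => PVX (z.1, z.2.1) * W z.2.1 z.2.2

/-- The joint input law `P_{VⁿXⁿ}` induced by the deterministic encoder `φ`:
`P_{Vⁿ}(v) 1{x = φ(v)}`. -/
noncomputable def codeInput {𝒱 𝒳 : Type*} [DecidableEq 𝒳] {n : ℕ} (PV : Word 𝒱 n → ℝ)
    (φ : Word 𝒱 n → Word 𝒳 n) : Word 𝒱 n × Word 𝒳 n → ℝ :=
  fun vx => if vx.2 = φ vx.1 then PV vx.1 else 0

/-- Error probability `εₙ` of the joint source-channel code `(φ, ψ)`. -/
noncomputable def errProb {𝒱 𝒳 𝒴 : Type*} {n : ℕ}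
    (PV : Word 𝒱 n → ℝ) (W : Word 𝒳 n → Word 𝒴 n → ℝ)
    (φ : Word 𝒱 n → Word 𝒳 n) (ψ : Word 𝒴 n → Word 𝒱 n) : ℝ :=
  ∑' v, PV v * prob (W (φ v)) {y | ψ y ≠ v}

/-- `V` is transmissible over `W`. -/
def Transmissible {𝒱 𝒳 𝒴 : Type*} (PV : (n : ℕ) → Word 𝒱 n → ℝ)
    (W : (n : ℕ) → Word 𝒳 n → Word 𝒴 n → ℝ) : Prop :=
  ∃ (φ : (n : ℕ) → Word 𝒱 n → Word 𝒳 n) (ψ : (n : ℕ) → Word 𝒴 n → Word 𝒱 n),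
    Tendsto (fun n => errProb (PV n) (W n) (φ n) (ψ n)) atTop (nhds 0)

/-- Output marginal of the channel `W` for an input distribution `P_{Xⁿ}`. -/
noncomputable def outDistX {𝒳 𝒴 : Type*} {n : ℕ}
    (PX : Word 𝒳 n → ℝ) (W : Word 𝒳 n → Word 𝒴 n → ℝ) (y : Word 𝒴 n) : ℝ :=
  ∑' x : Word 𝒳 n, PX x * W x y

/-- Joint law of `(Xⁿ, Yⁿ)`: `P_{Xⁿ}(x) · Wⁿ(y|x)`. -/
noncomputable def jointXY {𝒳 𝒴 : Type*} {n : ℕ}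
    (PX : Word 𝒳 n → ℝ) (W : Word 𝒳 n → Word 𝒴 n → ℝ) :
    Word 𝒳 n × Word 𝒴 n → ℝ :=
  fun z => PX z.1 * W z.1 z.2

/-- Limit superior in probability of a sequence of random variables `Z i`
distributed according to the pmfs `p i`. -/
noncomputable def plimsup {α : ℕ → Type*} (p : (i : ℕ) → α i → ℝ)
    (Z : (i : ℕ) → α i → ℝ) : EReal :=
  sInf {β : EReal |
    Tendsto (fun i => prob (p i) {a | β < (Z i a : EReal)}) atTop (nhds 0)}

/-- Limit inferior in probability of a sequence of random variables `Z i`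
distributed according to the pmfs `p i`. -/
noncomputable def pliminf {α : ℕ → Type*} (p : (i : ℕ) → α i → ℝ)
    (Z : (i : ℕ) → α i → ℝ) : EReal :=
  sSup {β : EReal |
    Tendsto (fun i => prob (p i) {a | (Z i a : EReal) < β}) atTop (nhds 0)}

/-- Spectral sup-entropy rate `H̄(V)`. -/
noncomputable def Hbar {𝒱 : Type*} (PV : (n : ℕ) → Word 𝒱 n → ℝ) : EReal :=
  plimsup (fun n => PV n) (fun n v => (1 / (n : ℝ)) * Real.log (1 / PV n v))

/-- Spectral inf-entropy rate `H_(V)`. -/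
noncomputable def Hlow {𝒱 : Type*} (PV : (n : ℕ) → Word 𝒱 n → ℝ) : EReal :=
  pliminf (fun n => PV n) (fun n v => (1 / (n : ℝ)) * Real.log (1 / PV n v))

/-- Spectral inf-information rate `I_(X;Y)` of the channel `W` with input `X`. -/
noncomputable def Ilow {𝒳 𝒴 : Type*} (PX : (n : ℕ) → Word 𝒳 n → ℝ)
    (W : (n : ℕ) → Word 𝒳 n → Word 𝒴 n → ℝ) : EReal :=
  pliminf (fun n => jointXY (PX n) (W n))
    (fun n z => (1 / (n : ℝ)) * Real.log (W n z.1 z.2 / outDistX (PX n) (W n) z.2))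

/-- Spectral sup-information rate `Ī(X;Y)` of the channel `W` with input `X`. -/
noncomputable def Ihigh {𝒳 𝒴 : Type*} (PX : (n : ℕ) → Word 𝒳 n → ℝ)
    (W : (n : ℕ) → Word 𝒳 n → Word 𝒴 n → ℝ) : EReal :=
  plimsup (fun n => jointXY (PX n) (W n))
    (fun n z => (1 / (n : ℝ)) * Real.log (W n z.1 z.2 / outDistX (PX n) (W n) z.2))

/-- `sup_X I_(X;Y)`: the supremum over all channel inputs. -/
noncomputable def supIlow {𝒳 𝒴 : Type*}
    (W : (n : ℕ) → Word 𝒳 n → Word 𝒴 n → ℝ) : EReal :=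
  ⨆ PX : {PX : (n : ℕ) → Word 𝒳 n → ℝ // ∀ n, IsPMF (PX n)}, Ilow PX.1 W


theorem isPMF_iff {α : Type*} {p : α → ℝ} :
    IsPMF p ↔ (∀ a, 0 ≤ p a) ∧ ∑' a, ENNReal.ofReal (p a) = 1 := by
  constructor
  · rintro ⟨h0, h1⟩
    refine ⟨h0, ?_⟩
    rw [← ENNReal.ofReal_tsum_of_nonneg h0 h1.summable, h1.tsum_eq, ENNReal.ofReal_one]
  · rintro ⟨h0, h1⟩
    refine ⟨h0, ?_⟩
    have hs : Summable p := by
      have := ENNReal.summable_toReal (f := fun a => ENNReal.ofReal (p a)) (by rw [h1]; simp)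
      simpa [ENNReal.toReal_ofReal, h0] using this
    have h2 := ENNReal.ofReal_tsum_of_nonneg h0 hs
    rw [h1] at h2
    have h3 : ∑' a, p a = 1 := by simpa using h2
    rw [← h3]; exact hs.hasSum

theorem ofReal_prob {α : Type*} {p : α → ℝ} (hp : IsPMF p) (S : Set α) :
    ENNReal.ofReal (prob p S) = ∑' a, S.indicator (fun a => ENNReal.ofReal (p a)) a := by
  unfold prob
  rw [ENNReal.ofReal_tsum_of_nonneg]
  · refine tsum_congr fun a => ?_
    by_cases h : a ∈ S <;> simp [h]
  · exact fun a => Set.indicator_nonneg (fun a _ => hp.1 a) a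
  · exact hp.2.summable.indicator S

theorem prob_nonneg {α : Type*} {p : α → ℝ} (hp : IsPMF p) (S : Set α) : 0 ≤ prob p S :=
  tsum_nonneg fun a => Set.indicator_nonneg (fun a _ => hp.1 a) a

theorem prob_mono' {α : Type*} {p : α → ℝ} (hp : IsPMF p) {S T : Set α}
    (h : ∀ a ∈ S, 0 < p a → a ∈ T) : prob p S ≤ prob p T := by
  refine Summable.tsum_le_tsum (fun a => ?_) (hp.2.summable.indicator S) (hp.2.summable.indicator T)
  by_cases hS : a ∈ S
  · rcases (hp.1 a).lt_or_eq with h1 | h1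
    · simp [hS, h a hS h1]
    · simp [hS, ← h1]
      exact Set.indicator_nonneg (fun a _ => hp.1 a) a
  · simp only [hS, not_false_eq_true, Set.indicator_of_notMem]
    exact Set.indicator_nonneg (fun a _ => hp.1 a) a

theorem prob_univ {α : Type*} {p : α → ℝ} (hp : IsPMF p) : prob p Set.univ = 1 := by
  simp [prob, hp.2.tsum_eq]

theorem prob_le_one {α : Type*} {p : α → ℝ} (hp : IsPMF p) (S : Set α) : prob p S ≤ 1 := by
  rw [← prob_univ hp]; exact prob_mono' hp (by simp)

theorem prob_union_le {α : Type*} {p : α → ℝ} (hp : IsPMF p) (S T : Set α) :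
    prob p (S ∪ T) ≤ prob p S + prob p T := by
  unfold prob
  rw [← (hp.2.summable.indicator S).tsum_add (hp.2.summable.indicator T)]
  refine Summable.tsum_le_tsum (fun a => ?_) (hp.2.summable.indicator _)
    ((hp.2.summable.indicator S).add (hp.2.summable.indicator T))
  have := hp.1 a
  by_cases hS : a ∈ S <;> by_cases hT : a ∈ T <;> simp [hS, hT, this]

theorem tail_tendsto {α : Type*} {p : α → ℝ} (hp : IsPMF p) (Z : α → ℝ) {η : ℝ} (hη : 0 < η) :
    Tendsto (fun k : ℕ => prob p {a | (k : ℝ) * η ≤ Z a}) atTop (nhds 0) := by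
  have h := tendsto_tsum_of_dominated_convergence (𝓕 := atTop)
    (f := fun (k : ℕ) a => {a | (k : ℝ) * η ≤ Z a}.indicator p a) (g := fun _ => (0 : ℝ))
    (bound := p) hp.2.summable ?_ ?_
  · simpa [prob] using h
  · intro a
    apply tendsto_const_nhds.congr'
    obtain ⟨k, hk⟩ := exists_nat_gt (Z a / η)
    filter_upwards [eventually_ge_atTop k] with m hm
    have h1 : (k : ℝ) ≤ m := by exact_mod_cast hm
    rw [div_lt_iff₀ hη] at hk
    have : ¬ ((m : ℝ) * η ≤ Z a) := by
      push Not
      exact hk.trans_le (by gcongr)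
    simp [this]
  · refine Eventually.of_forall fun k a => ?_
    have := hp.1 a
    by_cases h : (k : ℝ) * η ≤ Z a <;> simp [h, abs_of_nonneg, this]

/-- approximate quantile -/
theorem exists_quantile {α : Type*} {p : α → ℝ} (hp : IsPMF p) (Z : α → ℝ)
    (hZ : ∀ a, 0 < p a → 0 ≤ Z a) {η δ : ℝ} (hη : 0 < η) (hδ : 0 < δ) (hδ1 : δ ≤ 1) :
    ∃ c : ℝ, δ ≤ prob p {a | c ≤ Z a} ∧ prob p {a | c + η ≤ Z a} ≤ δ := by
  classical
  have hex : ∃ k : ℕ, prob p {a | ((k + 1 : ℕ) : ℝ) * η ≤ Z a} < δ := by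
    have h := (tendsto_add_atTop_iff_nat 1).2 (tail_tendsto hp Z hη)
    exact (h.eventually_lt_const hδ).exists
  refine ⟨(Nat.find hex : ℝ) * η, ?_, ?_⟩
  · rcases Nat.eq_zero_or_pos (Nat.find hex) with h0 | h0
    · rw [h0]
      refine hδ1.trans ?_
      rw [← prob_univ hp]
      refine prob_mono' hp fun a _ ha => ?_
      simpa using hZ a ha
    · have := Nat.find_min hex (m := Nat.find hex - 1) (by omega)
      rw [Nat.sub_add_cancel h0] at this
      exact not_lt.1 this
  · have := Nat.find_spec hex
    have e : ((Nat.find hex + 1 : ℕ) : ℝ) * η = (Nat.find hex : ℝ) * η + η := by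
      rw [Nat.cast_succ, add_mul, one_mul]
    rw [e] at this
    exact this.le

theorem marg_ofReal {α β : Type*} {p : α → ℝ} {q : α × β → ℝ} (hq : IsPMF q)
    (hm : ∀ a, ∑' b, q (a, b) = p a) (a : α) :
    ∑' b, ENNReal.ofReal (q (a, b)) = ENNReal.ofReal (p a) := by
  rw [← hm, ENNReal.ofReal_tsum_of_nonneg (fun b => hq.1 _)]
  exact hq.2.summable.prod_factor a

def jl {α β κ : Type*} (q : α × β → ℝ) (w : β → κ → ℝ) : α × β × κ → ℝ :=
  fun z => q (z.1, z.2.1) * w z.2.1 z.2.2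

theorem jl_pmf {α β κ : Type*} {q : α × β → ℝ} {w : β → κ → ℝ} (hq : IsPMF q)
    (hw : ∀ b, IsPMF (w b)) : IsPMF (jl q w) := by
  rw [isPMF_iff]
  refine ⟨fun z => mul_nonneg (hq.1 _) ((hw _).1 _), ?_⟩
  simp only [jl]
  simp_rw [ENNReal.tsum_prod', ENNReal.ofReal_mul (hq.1 _), ENNReal.tsum_mul_left,
    (isPMF_iff.1 (hw _)).2, mul_one]
  rw [← (isPMF_iff.1 hq).2, ENNReal.tsum_prod']

theorem jl_marg {α β κ : Type*} {p : α → ℝ} {q : α × β → ℝ} {w : β → κ → ℝ} (hp : IsPMF p)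
    (hq : IsPMF q)
    (hm : ∀ a, ∑' b, q (a, b) = p a) (hw : ∀ b, IsPMF (w b)) (A : Set α) :
    prob (jl q w) {z | z.1 ∈ A} = prob p A := by
  have h : ENNReal.ofReal (prob (jl q w) {z | z.1 ∈ A}) = ENNReal.ofReal (prob p A) := by
    rw [ofReal_prob (jl_pmf hq hw), ofReal_prob hp]
    rw [ENNReal.tsum_prod']
    refine tsum_congr fun a => ?_
    by_cases ha : a ∈ A
    · simp only [Set.indicator, Set.mem_ofPred_eq, ha, if_true, jl]
      simp_rw [ENNReal.tsum_prod', ENNReal.ofReal_mul (hq.1 _), ENNReal.tsum_mul_left,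
        (isPMF_iff.1 (hw _)).2, mul_one]
      exact marg_ofReal hq hm a
    · simp [Set.indicator, ha]
  rwa [ENNReal.ofReal_eq_ofReal_iff (prob_nonneg (jl_pmf hq hw) _) (prob_nonneg hp _)] at h

theorem out_summable {α β κ : Type*} {q : α × β → ℝ} {w : β → κ → ℝ}
    (hq : IsPMF q) (hw : ∀ b, IsPMF (w b)) (y : κ) :
    Summable (fun z : α × β => q z * w z.2 y) := by
  refine Summable.of_nonneg_of_le (fun z => mul_nonneg (hq.1 _) ((hw _).1 _)) (fun z => ?_)
    hq.2.summable
  have h1 : w z.2 y ≤ 1 := le_hasSum (hw z.2).2 y (fun j _ => (hw _).1 j)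
  exact mul_le_of_le_one_right (hq.1 _) h1

theorem out_pos {α β κ : Type*} {q : α × β → ℝ} {w : β → κ → ℝ}
    (hq : IsPMF q) (hw : ∀ b, IsPMF (w b)) {z : α × β × κ} (hz : 0 < jl q w z) :
    0 < w z.2.1 z.2.2 ∧ 0 < ∑' vx : α × β, q vx * w vx.2 z.2.2 := by
  constructor
  · exact pos_of_mul_pos_right hz (hq.1 _)
  · refine lt_of_lt_of_le hz ?_
    exact (out_summable hq hw z.2.2).le_tsum (z.1, z.2.1)
      (fun j _ => mul_nonneg (hq.1 _) ((hw _).1 _))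

theorem core {α β κ : Type*} {p : α → ℝ} {q : α × β → ℝ} {w : β → κ → ℝ} (hp : IsPMF p)
    (hq : IsPMF q) (hm : ∀ a, ∑' b, q (a, b) = p a) (hw : ∀ b, IsPMF (w b)) (S : Set α)
    {δ : ℝ} (hδ : 0 < δ) (hS : δ ≤ prob p S) :
    ∃ q' : α × β → ℝ, IsPMF q' ∧ (∀ a, ∑' b, q' (a, b) = p a) ∧
      (∀ y, ∑' vx : α × β, q' vx * w vx.2 y ≤ (∑' vx : α × β, q vx * w vx.2 y) / δ) ∧
      (∀ B : Set (β × κ), prob (jl q' w) {z | z.2 ∈ B} ≤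
        prob (jl q w) {z | z.1 ∈ S ∧ z.2 ∈ B} / δ) := by
  classical
  set s := prob p S with hs
  have hs0 : 0 < s := hδ.trans_le hS
  let g : α × β → ℝ := fun z => if z.1 ∈ S then q z else 0
  have hg0 : ∀ z, 0 ≤ g z := fun z => by
    simp only [g]; split_ifs; exacts [hq.1 z, le_rfl]
  have hgq : ∀ z, g z ≤ q z := fun z => by
    simp only [g]; split_ifs; exacts [le_rfl, hq.1 z]
  have hgs : Summable g := Summable.of_nonneg_of_le hg0 hgq hq.2.summable
  have hgb : ∀ b, Summable fun a => g (a, b) := fun b =>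
    hgs.comp_injective (i := fun a => (a, b)) (fun a a' h => (Prod.mk.inj h).1)
  let r : β → ℝ := fun b => (∑' a, g (a, b)) / s
  have hr0 : ∀ b, 0 ≤ r b := fun b => div_nonneg (tsum_nonneg fun a => hg0 _) hs0.le
  have hrE : ∀ b, ENNReal.ofReal (r b) =
      (∑' a, ENNReal.ofReal (g (a, b))) * (ENNReal.ofReal s)⁻¹ := fun b => by
    simp only [r]
    rw [ENNReal.ofReal_div_of_pos hs0, ENNReal.ofReal_tsum_of_nonneg (fun a => hg0 _) (hgb b),
      div_eq_mul_inv]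
  have hsE0 : ENNReal.ofReal s ≠ 0 := by simpa using hs0
  have hsum_gE : ∑' b, ∑' a, ENNReal.ofReal (g (a, b)) = ENNReal.ofReal s := by
    rw [ENNReal.tsum_comm, hs, ofReal_prob hp]
    refine tsum_congr fun a => ?_
    by_cases ha : a ∈ S
    · simp [g, ha, marg_ofReal hq hm]
    · simp [g, ha]
  have hrP : IsPMF r := by
    rw [isPMF_iff]
    refine ⟨hr0, ?_⟩
    simp_rw [hrE, ENNReal.tsum_mul_right, hsum_gE]
    exact ENNReal.mul_inv_cancel hsE0 (by simp)
  let q' : α × β → ℝ := fun z => p z.1 * r z.2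
  have hq' : IsPMF q' := by
    rw [isPMF_iff]
    refine ⟨fun z => mul_nonneg (hp.1 _) (hr0 _), ?_⟩
    simp only [q']
    simp_rw [ENNReal.tsum_prod', ENNReal.ofReal_mul (hp.1 _), ENNReal.tsum_mul_left,
      (isPMF_iff.1 hrP).2, mul_one, (isPMF_iff.1 hp).2]
  have key : ∀ f : β → ENNReal, ∑' b, ENNReal.ofReal (r b) * f b =
      (∑' z : α × β, ENNReal.ofReal (g z) * f z.2) * (ENNReal.ofReal s)⁻¹ := fun f => by
    rw [ENNReal.tsum_prod', ENNReal.tsum_comm, ← ENNReal.tsum_mul_right]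
    refine tsum_congr fun b => ?_
    rw [hrE]
    simp only [ENNReal.tsum_mul_right]
    ring
  have hinv : (ENNReal.ofReal s)⁻¹ ≤ (ENNReal.ofReal δ)⁻¹ :=
    ENNReal.inv_le_inv.2 (ENNReal.ofReal_le_ofReal hS)
  refine ⟨q', hq', fun a => ?_, fun y => ?_, fun B => ?_⟩
  · simp only [q']
    rw [tsum_mul_left, hrP.2.tsum_eq, mul_one]
  · have hn : ∀ z : α × β, 0 ≤ q z * w z.2 y := fun z => mul_nonneg (hq.1 _) ((hw _).1 _)
    have hn' : ∀ z : α × β, 0 ≤ q' z * w z.2 y := fun z => mul_nonneg (hq'.1 _) ((hw _).1 _)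
    rw [← ENNReal.ofReal_le_ofReal_iff (div_nonneg (tsum_nonneg hn) hδ.le),
      ENNReal.ofReal_div_of_pos hδ, ENNReal.ofReal_tsum_of_nonneg hn (out_summable hq hw y),
      ENNReal.ofReal_tsum_of_nonneg hn' (out_summable hq' hw y), div_eq_mul_inv]
    have e : ∑' z : α × β, ENNReal.ofReal (q' z * w z.2 y) =
        ∑' b, ENNReal.ofReal (r b) * ENNReal.ofReal (w b y) := by
      simp only [q', mul_assoc]
      simp_rw [ENNReal.tsum_prod', ENNReal.ofReal_mul (hp.1 _), ENNReal.tsum_mul_left,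
        ENNReal.tsum_mul_right, (isPMF_iff.1 hp).2, one_mul, ENNReal.ofReal_mul (hr0 _)]
    rw [e, key]
    refine mul_le_mul' (ENNReal.tsum_le_tsum fun z => ?_) hinv
    rw [ENNReal.ofReal_mul (hq.1 _)]
    exact mul_le_mul' (ENNReal.ofReal_le_ofReal (hgq z)) le_rfl
  · rw [← ENNReal.ofReal_le_ofReal_iff (div_nonneg (prob_nonneg (jl_pmf hq hw) _) hδ.le),
      ENNReal.ofReal_div_of_pos hδ, ofReal_prob (jl_pmf hq' hw), ofReal_prob (jl_pmf hq hw),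
      div_eq_mul_inv]
    let f : β → ENNReal := fun b => ∑' k, if (b, k) ∈ B then ENNReal.ofReal (w b k) else 0
    have e : ∑' z : α × β × κ, {z : α × β × κ | z.2 ∈ B}.indicator
        (fun z => ENNReal.ofReal (jl q' w z)) z = ∑' b, ENNReal.ofReal (r b) * f b := by
      have e1 : ∀ z : α × β × κ, {z : α × β × κ | z.2 ∈ B}.indicator
          (fun z => ENNReal.ofReal (jl q' w z)) z = ENNReal.ofReal (p z.1) *
            (ENNReal.ofReal (r z.2.1) * if z.2 ∈ B then ENNReal.ofReal (w z.2.1 z.2.2) else 0) := by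
        intro z
        by_cases hz : z.2 ∈ B
        · simp [hz, jl, q', ENNReal.ofReal_mul, hp.1, hr0, mul_nonneg, mul_assoc]
        · simp [hz]
      simp_rw [e1, ENNReal.tsum_prod', ENNReal.tsum_mul_left,
        ENNReal.tsum_mul_right, (isPMF_iff.1 hp).2, one_mul, f]
    have e2 : ∑' z : α × β × κ, {z : α × β × κ | z.1 ∈ S ∧ z.2 ∈ B}.indicator
        (fun z => ENNReal.ofReal (jl q w z)) z =
        ∑' z : α × β, ENNReal.ofReal (g z) * f z.2 := by
      have e1 : ∀ z : α × β × κ, {z : α × β × κ | z.1 ∈ S ∧ z.2 ∈ B}.indicator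
          (fun z => ENNReal.ofReal (jl q w z)) z = ENNReal.ofReal (g (z.1, z.2.1)) *
            (if z.2 ∈ B then ENNReal.ofReal (w z.2.1 z.2.2) else 0) := by
        intro z
        by_cases hz : z.2 ∈ B <;> by_cases hS : z.1 ∈ S
        · simp [hz, hS, jl, g, ENNReal.ofReal_mul, hq.1]
        all_goals simp [hz, hS, g]
      simp_rw [e1, ENNReal.tsum_prod', ENNReal.tsum_mul_left, f]
    rw [e, key, e2]
    exact mul_le_mul' le_rfl hinv

/-- **Equivalence of sufficient conditions** (Theorem 4.3). -/
theorem equivalence_of_sufficient_conditions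
    {𝒱 𝒳 𝒴 : Type} [Countable 𝒱] [Countable 𝒳] [Countable 𝒴]
    (PV : (n : ℕ) → Word 𝒱 n → ℝ) (hPV : ∀ n, IsPMF (PV n))
    (W : (n : ℕ) → Word 𝒳 n → Word 𝒴 n → ℝ) (hW : ∀ n x, IsPMF (W n x)) :
    (∃ (PVX : (n : ℕ) → Word 𝒱 n × Word 𝒳 n → ℝ) (γ : ℕ → ℝ),
      (∀ n, IsPMF (PVX n)) ∧
      (∀ n v, (∑' x : Word 𝒳 n, PVX n (v, x)) = PV n v) ∧
      (∀ n, 0 < γ n) ∧ Tendsto γ atTop (nhds 0) ∧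
      Tendsto (fun n : ℕ => (n : ℝ) * γ n) atTop atTop ∧
      Tendsto (fun n =>
        prob (jointLaw (PVX n) (W n))
          {z : Word 𝒱 n × Word 𝒳 n × Word 𝒴 n |
            (1 / (n : ℝ)) * Real.log (W n z.2.1 z.2.2 / outDist (PVX n) (W n) z.2.2) ≤
              (1 / (n : ℝ)) * Real.log (1 / PV n z.1) + γ n}) atTop (nhds 0))
    ↔
    (∃ (PVX : (n : ℕ) → Word 𝒱 n × Word 𝒳 n → ℝ) (c : ℕ → ℝ) (γ : ℕ → ℝ),
      (∀ n, IsPMF (PVX n)) ∧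
      (∀ n v, (∑' x : Word 𝒳 n, PVX n (v, x)) = PV n v) ∧
      (∀ n, 0 < γ n) ∧ Tendsto γ atTop (nhds 0) ∧
      Tendsto (fun n : ℕ => (n : ℝ) * γ n) atTop atTop ∧
      Tendsto (fun n =>
        prob (PV n) {v : Word 𝒱 n | c n ≤ (1 / (n : ℝ)) * Real.log (1 / PV n v)} +
        prob (jointLaw (PVX n) (W n))
          {z : Word 𝒱 n × Word 𝒳 n × Word 𝒴 n |
            (1 / (n : ℝ)) * Real.log (W n z.2.1 z.2.2 / outDist (PVX n) (W n) z.2.2) ≤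
              c n + γ n}) atTop (nhds 0)) := by
  constructor
  · rintro ⟨PVX, γ, hq, hm, hγ, hγ0, hnγ, hlim⟩
    set ε : ℕ → ℝ := fun n => prob (jointLaw (PVX n) (W n))
          {z : Word 𝒱 n × Word 𝒳 n × Word 𝒴 n |
            (1 / (n : ℝ)) * Real.log (W n z.2.1 z.2.2 / outDist (PVX n) (W n) z.2.2) ≤
              (1 / (n : ℝ)) * Real.log (1 / PV n z.1) + γ n} with hε
    have hε0 : ∀ n, 0 ≤ ε n := fun n => prob_nonneg (jl_pmf (hq n) (hW n)) _
    have hε1 : ∀ n, ε n ≤ 1 := fun n => prob_le_one (jl_pmf (hq n) (hW n)) _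
    let δ : ℕ → ℝ := fun n => max (√(ε n)) (Real.exp (-((n : ℝ) * γ n / 4)))
    have hδ : ∀ n, 0 < δ n := fun n => lt_max_of_lt_right (Real.exp_pos _)
    have hδ1 : ∀ n, δ n ≤ 1 := fun n => by
      refine max_le (Real.sqrt_le_one.2 (hε1 n)) (Real.exp_le_one_iff.2 ?_)
      have := hγ n
      have : 0 ≤ (n : ℝ) * γ n / 4 := by positivity
      linarith
    have hsq : Tendsto (fun n => √(ε n)) atTop (nhds 0) := by
      have h := (Real.continuous_sqrt.tendsto 0).comp hlim
      rw [Real.sqrt_zero] at h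
      exact h
    have hδ0 : Tendsto δ atTop (nhds 0) := by
      have h2 : Tendsto (fun n : ℕ => Real.exp (-((n : ℝ) * γ n / 4))) atTop (nhds 0) :=
        Real.tendsto_exp_neg_atTop_nhds_zero.comp (hnγ.atTop_div_const (by norm_num))
      simpa using hsq.max h2
    have hεδ : ∀ n, ε n / δ n ≤ √(ε n) := fun n => by
      rw [div_le_iff₀ (hδ n)]
      calc ε n = √(ε n) * √(ε n) := (Real.mul_self_sqrt (hε0 n)).symm
        _ ≤ √(ε n) * δ n := by gcongr; exact le_max_left _ _
    have hlogδ : ∀ n : ℕ, (1 / (n : ℝ)) * -Real.log (δ n) ≤ γ n / 4 := fun n => by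
      have h1 : -((n : ℝ) * γ n / 4) ≤ Real.log (δ n) := by
        rw [Real.le_log_iff_exp_le (hδ n)]; exact le_max_right _ _
      rcases Nat.eq_zero_or_pos n with h0 | h0
      · have := hγ n
        subst h0; simp; linarith
      · have h0' : (0 : ℝ) < n := by exact_mod_cast h0
        rw [one_div, inv_mul_le_iff₀ h0']
        linarith
    have hZ : ∀ n v, 0 < PV n v → 0 ≤ (1 / (n : ℝ)) * Real.log (1 / PV n v) := fun n v hv => by
      have h1 : PV n v ≤ 1 := le_hasSum (hPV n).2 v (fun j _ => (hPV n).1 j)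
      exact mul_nonneg (by positivity) (Real.log_nonneg (by rw [le_div_iff₀ hv]; linarith))
    have hη : ∀ n, 0 < γ n / 4 := fun n => by have := hγ n; linarith
    choose c hc1 hc2 using fun n => exists_quantile (hPV n)
      (fun v => (1 / (n : ℝ)) * Real.log (1 / PV n v)) (hZ n) (hη n) (hδ n) (hδ1 n)
    choose Q hQ hQm hQout hQB using fun n => core (hPV n) (hq n) (hm n) (hW n) _ (hδ n) (hc1 n)
    refine ⟨Q, fun n => c n + γ n / 4, fun n => γ n / 4, hQ, hQm, hη, ?_, ?_, ?_⟩
    · simpa using hγ0.div_const 4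
    · have := hnγ.atTop_div_const (show (0 : ℝ) < 4 by norm_num)
      simpa [mul_div_assoc] using this
    · have hub : Tendsto (fun n => δ n + √(ε n)) atTop (nhds 0) := by simpa using hδ0.add hsq
      refine squeeze_zero (fun n => add_nonneg (prob_nonneg (hPV n) _)
        (prob_nonneg (jl_pmf (hQ n) (hW n)) _)) (fun n => add_le_add (hc2 n) ?_) hub
      refine le_trans ?_ (hεδ n)
      let B : Set (Word 𝒳 n × Word 𝒴 n) := {xy |
        (1 / (n : ℝ)) * Real.log (W n xy.1 xy.2 / outDist (Q n) (W n) xy.2) ≤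
              c n + γ n / 4 + γ n / 4 ∧ 0 < W n xy.1 xy.2 ∧ 0 < outDist (Q n) (W n) xy.2}
      refine le_trans (prob_mono' (T := {z | z.2 ∈ B}) (jl_pmf (hQ n) (hW n)) ?_)
        ((hQB n B).trans ?_)
      · intro z hz hpos
        exact ⟨hz, out_pos (hQ n) (hW n) hpos⟩
      · refine div_le_div_of_nonneg_right ?_ (hδ n).le
        refine prob_mono' (jl_pmf (hq n) (hW n)) ?_
        rintro ⟨v, x, y⟩ ⟨hv, hB, hw, ho⟩ -
        have hv' : c n ≤ (1 / (n : ℝ)) * Real.log (1 / PV n v) := hv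
        have hout : outDist (Q n) (W n) y ≤ outDist (PVX n) (W n) y / δ n := hQout n y
        have hB' : (1 / (n : ℝ)) * Real.log (W n x y / outDist (Q n) (W n) y) ≤
              c n + γ n / 4 + γ n / 4 := hB
        have hw' : 0 < W n x y := hw
        have ho' : 0 < outDist (Q n) (W n) y := ho
        have ho2 : 0 < outDist (PVX n) (W n) y := by
          have h3 := ho'.trans_le hout
          exact (div_pos_iff_of_pos_right (hδ n)).1 h3
        show (1 / (n : ℝ)) * Real.log (W n x y / outDist (PVX n) (W n) y) ≤
              (1 / (n : ℝ)) * Real.log (1 / PV n v) + γ n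
        have h4 : Real.log (outDist (Q n) (W n) y) ≤
            Real.log (outDist (PVX n) (W n) y) - Real.log (δ n) := by
          rw [← Real.log_div ho2.ne' (hδ n).ne']
          exact Real.log_le_log ho' hout
        have h5 : Real.log (W n x y / outDist (PVX n) (W n) y) ≤
            Real.log (W n x y / outDist (Q n) (W n) y) + -Real.log (δ n) := by
          rw [Real.log_div hw'.ne' ho2.ne', Real.log_div hw'.ne' ho'.ne']
          linarith
        have h6 := mul_le_mul_of_nonneg_left h5 (show 0 ≤ 1 / (n : ℝ) by positivity)
        rw [mul_add] at h6
        have := hlogδ n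
        have := hγ n
        linarith
  · rintro ⟨PVX, c, γ, hq, hm, hγ, hγ0, hnγ, hlim⟩
    refine ⟨PVX, γ, hq, hm, hγ, hγ0, hnγ, ?_⟩
    refine squeeze_zero (fun n => prob_nonneg (jl_pmf (hq n) (hW n)) _) (fun n => ?_) hlim
    rw [← jl_marg (hPV n) (hq n) (hm n) (hW n)]
    refine le_trans ?_ (prob_union_le (jl_pmf (hq n) (hW n)) _ _)
    refine prob_mono' (jl_pmf (hq n) (hW n)) fun z hz _ => ?_
    by_cases h : c n ≤ (1 / (n : ℝ)) * Real.log (1 / PV n z.1)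
    · exact Or.inl h
    · have hz' : (1 / (n : ℝ)) * Real.log (W n z.2.1 z.2.2 / outDist (PVX n) (W n) z.2.2) ≤
              (1 / (n : ℝ)) * Real.log (1 / PV n z.1) + γ n := hz
      have h2 : (1 / (n : ℝ)) * Real.log (W n z.2.1 z.2.2 / outDist (PVX n) (W n) z.2.2) ≤
              c n + γ n := by linarith
      exact Or.inr h2

end ISC
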